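/- arXiv:1001.1783 — 2 statements merged into one kernel-verified Lean document; each statement's English description precedes it below -/
import Mathlib

section
/- Let b ≥ 2 and let n ≥ 1 have standard base-b digits n_l n_{l−1} ⋯ n_0 (so the leading digit is n_l = ⌊n / b^l⌋ and n′ = n mod b^l is the number with digits n_{l−1} ⋯ n_0). Then B_n(0) = 0, and for every β ≥ 1, B_n(β) = (b − n_l − 1) · A_{n′}(β−1) + (b − n_l) · B_{n′}(β−1), where B_{n′} is taken with respect to the l digit positions of n′. -/
/-- The number of integers `0 ≤ m ≤ n` such that `C(n,m)` is not divisible by `k`,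
i.e. the number of nonzero entries on row `n` of Pascal's triangle modulo `k`. -/
def rowCount (k n : ℕ) : ℕ :=
  ((Finset.range (n + 1)).filter fun m => ¬ k ∣ n.choose m).card

/-- The number of borrows when subtracting `m` from `n` in base `b` (for `m ≤ n`):
the number of indices `i ≥ 0` with `m mod b^(i+1) > n mod b^(i+1)`. -/
def borrowCount (b n m : ℕ) : ℕ :=
  ((Finset.range (Nat.digits b n).length).filter fun i => n % b ^ (i + 1) < m % b ^ (i + 1)).card

/-- `A_n(β)`: the number of `0 ≤ m ≤ n` with exactly `β` borrows
when subtracting `m` from `n` in base `b`. -/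
def borrowA (b n β : ℕ) : ℕ :=
  ((Finset.range (n + 1)).filter fun m => borrowCount b n m = β).card

/-- `B_n(β)` with respect to `L` digit positions: the number of `n < m ≤ b^L - 1` such that
exactly `β` of the indices `0 ≤ i ≤ L - 1` satisfy `m mod b^(i+1) > n mod b^(i+1)`. -/
def borrowB (b L n β : ℕ) : ℕ :=
  ((Finset.Ioc n (b ^ L - 1)).filter fun m =>
    ((Finset.range L).filter fun i => n % b ^ (i + 1) < m % b ^ (i + 1)).card = β).card

/-- The base-`b` digit string of `n`, most significant digit first (empty for `n = 0`). -/
def wordOf (b n : ℕ) : List ℕ := (Nat.digits b n).reverse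

/-- `|n|_w`: the number of occurrences of `w` as a contiguous subword of the
base-`b` digit string of `n`. -/
def subwordCount (b n : ℕ) (w : List ℕ) : ℕ :=
  ((Finset.range ((wordOf b n).length + 1 - w.length)).filter fun s =>
    ((wordOf b n).drop s).take w.length = w).card

/-- `c(w_k ⋯ w_0)` for a word `w = [w_k, …, w_0]` (most significant letter first):
`(w_k/(w_k+1)) · (∏_{h=1}^{k−1} (b−w_{k−h})/(w_{k−h}+1)) · (b−w_0−1)/(w_0+1)`. -/
def cword (b : ℕ) (w : List ℕ) : ℚ :=
  ((w.getD 0 0 : ℚ) / ((w.getD 0 0 : ℚ) + 1)) *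
    (∏ h ∈ Finset.Ico 1 (w.length - 1),
      ((b : ℚ) - (w.getD h 0 : ℚ)) / ((w.getD h 0 : ℚ) + 1)) *
    (((b : ℚ) - (w.getD (w.length - 1) 0 : ℚ) - 1) / ((w.getD (w.length - 1) 0 : ℚ) + 1))

/-- The sum `Σ c(v)c(w)⋯c(z)` over all sets of pairwise nonoverlapping contiguous subwords
of `W` (identified by their position intervals: a pair `(s, len)` denotes the subword
occupying positions `s, …, s+len-1`) whose multiset of lengths equals `P`. -/
def nonoverlapSum (b : ℕ) (W : List ℕ) (P : Multiset ℕ) : ℚ :=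
  ∑ S ∈ ((Finset.range W.length ×ˢ Finset.Icc 1 W.length).powerset.filter fun S =>
      Multiset.map Prod.snd S.val = P ∧
      (∀ q ∈ S, q.1 + q.2 ≤ W.length) ∧
      (∀ q ∈ S, ∀ r ∈ S, q ≠ r → q.1 + q.2 ≤ r.1 ∨ r.1 + r.2 ≤ q.1)),
    ∏ q ∈ S, cword b ((W.drop q.1).take q.2)

/-!
When `n < m` and both have `l + 1` digits, the topmost position always borrows, and whether one of
the lower `l` positions borrows depends only on `m mod b ^ l`. Hence `B_n(β + 1)` counts the `m`
with `n < m < b ^ (l + 1)` satisfying a condition `p` of period `b ^ l`. Write `n = b ^ l * d + n'`.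
One period contains `A_{n'}(β) + B_{n'}(β)` solutions of `p`, of which `A_{n'}(β)` lie in `[0, n']`,
so counting over `[0, b ^ (l + 1))` and removing `[0, n]` gives
`B_n(β + 1) = b * (A_{n'}(β) + B_{n'}(β)) - (d * (A_{n'}(β) + B_{n'}(β)) + A_{n'}(β))`.
-/

section Count

variable {p : ℕ → Prop} [DecidablePred p] {n N : ℕ}

theorem count_mul_add_of_periodic (hp : Function.Periodic p N) (c r : ℕ) :
    Nat.count p (N * c + r) = c * Nat.count p N + Nat.count p r := by
  induction c with
  | zero => simp
  | succ c ih =>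
    have shift : Nat.count (fun m => p (N + m)) (N * c + r) = Nat.count p (N * c + r) := by
      simp only [add_comm N, hp _]
    rw [show N * (c + 1) + r = N + (N * c + r) by ring, Nat.count_add, shift, ih]
    ring

theorem count_add_one_add_card_filter_Ioc (hn : n < N) :
    Nat.count p (n + 1) + ((Finset.Ioc n (N - 1)).filter p).card = Nat.count p N := by
  have Ioc_eq_Ico : Finset.Ioc n (N - 1) = Finset.Ico (n + 1) N := by
    ext m
    simp only [Finset.mem_Ioc, Finset.mem_Ico]
    omega
  simp only [Nat.count_eq_card_filter_range, Ioc_eq_Ico, Finset.card_filter]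
  exact Finset.sum_range_add_sum_Ico _ hn

end Count

/-- The number of borrows among the lowest `L` positions when subtracting `m` from `n` in base `b`.
Unlike in `borrowCount`, the number of positions is independent of `n`, and `m` may exceed `n`. -/
def borrowsBelow (b L n m : ℕ) : ℕ :=
  ((Finset.range L).filter fun i => n % b ^ (i + 1) < m % b ^ (i + 1)).card

section Borrows

variable {b L n m : ℕ}

theorem borrowsBelow_mod_left (b L n m : ℕ) :
    borrowsBelow b L (n % b ^ L) m = borrowsBelow b L n m := by
  refine congrArg Finset.card (Finset.filter_congr fun i hi => ?_)
  rw [Nat.mod_mod_of_dvd n (pow_dvd_pow b (Finset.mem_range.1 hi))]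

theorem borrowsBelow_periodic (b L n : ℕ) : Function.Periodic (borrowsBelow b L n) (b ^ L) := by
  refine fun m => congrArg Finset.card (Finset.filter_congr fun i hi => ?_)
  have mod_eq : (m + b ^ L) % b ^ (i + 1) = m % b ^ (i + 1) :=
    Nat.add_modEq_left_iff.2 (pow_dvd_pow b (Finset.mem_range.1 hi))
  rw [mod_eq]

theorem borrowsBelow_add_one (hnm : n < m) (hm : m < b ^ (L + 1)) :
    borrowsBelow b (L + 1) n m = borrowsBelow b L n m + 1 := by
  have top_borrow : n % b ^ (L + 1) < m % b ^ (L + 1) := by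
    rwa [Nat.mod_eq_of_lt hm, Nat.mod_eq_of_lt (hnm.trans hm)]
  rw [borrowsBelow, Finset.range_add_one, Finset.filter_insert, if_pos top_borrow,
    Finset.card_insert_of_notMem (by simp), borrowsBelow]

theorem borrowCount_eq_borrowsBelow (hb : 1 < b) (hn : n < b ^ L) (hmn : m ≤ n) :
    borrowCount b n m = borrowsBelow b L n m := by
  have length_le : (Nat.digits b n).length ≤ L := (Nat.digits_length_le_iff hb n).2 hn
  refine congrArg Finset.card (Finset.Subset.antisymm
    (Finset.filter_subset_filter _ (Finset.range_mono length_le)) fun i hi => ?_)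
  have borrow := (Finset.mem_filter.1 hi).2
  refine Finset.mem_filter.2 ⟨Finset.mem_range.2 ?_, borrow⟩
  by_contra! length_le_i
  have n_lt : n < b ^ (i + 1) := (Nat.digits_length_le_iff hb n).1 (by omega)
  rw [Nat.mod_eq_of_lt n_lt, Nat.mod_eq_of_lt (hmn.trans_lt n_lt)] at borrow
  exact borrow.not_ge hmn

theorem borrowA_eq_count (hb : 1 < b) (hn : n < b ^ L) (β : ℕ) :
    borrowA b n β = Nat.count (fun m => borrowsBelow b L n m = β) (n + 1) := by
  rw [Nat.count_eq_card_filter_range]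
  refine congrArg Finset.card (Finset.filter_congr fun m hm => ?_)
  rw [borrowCount_eq_borrowsBelow hb hn (Finset.mem_range_succ_iff.1 hm)]

theorem borrowA_add_borrowB (hb : 1 < b) (hn : n < b ^ L) (β : ℕ) :
    borrowA b n β + borrowB b L n β =
      Nat.count (fun m => borrowsBelow b L n m = β) (b ^ L) := by
  rw [borrowA_eq_count hb hn]
  exact count_add_one_add_card_filter_Ioc hn

theorem borrowB_add_one_eq_card (b L n β : ℕ) :
    borrowB b (L + 1) n β =
      ((Finset.Ioc n (b ^ (L + 1) - 1)).filter fun m => borrowsBelow b L n m + 1 = β).card := by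
  refine congrArg Finset.card (Finset.filter_congr fun m hm => ?_)
  obtain ⟨hnm, hm⟩ := Finset.mem_Ioc.1 hm
  rw [← borrowsBelow_add_one hnm (by omega), borrowsBelow]

theorem borrowB_add_one_zero (b L n : ℕ) : borrowB b (L + 1) n 0 = 0 := by
  simp [borrowB_add_one_eq_card]

theorem count_add_one_add_borrowB (hn : n < b ^ (L + 1)) (β : ℕ) :
    Nat.count (fun m => borrowsBelow b L n m = β) (n + 1) + borrowB b (L + 1) n (β + 1) =
      Nat.count (fun m => borrowsBelow b L n m = β) (b ^ (L + 1)) := by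
  simp only [borrowB_add_one_eq_card, Nat.add_right_cancel_iff]
  exact count_add_one_add_card_filter_Ioc hn

-- Stated additively to avoid truncated subtraction: the multiples of `A + B` count full periods,
-- the lone `A` counts the incomplete period ending at `n`.
theorem add_borrowB_add_one_eq_mul (hb : 1 < b) (hn : n < b ^ (L + 1)) (β : ℕ) :
    n / b ^ L * (borrowA b (n % b ^ L) β + borrowB b L (n % b ^ L) β) +
        borrowA b (n % b ^ L) β + borrowB b (L + 1) n (β + 1) =
      b * (borrowA b (n % b ^ L) β + borrowB b L (n % b ^ L) β) := by
  have rem_lt : n % b ^ L < b ^ L := Nat.mod_lt n (by positivity)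
  have periodic : Function.Periodic (fun m => borrowsBelow b L n m = β) (b ^ L) :=
    (borrowsBelow_periodic b L n).comp (· = β)
  rw [borrowA_add_borrowB hb rem_lt, borrowA_eq_count hb rem_lt]
  simp only [borrowsBelow_mod_left]
  rw [← count_mul_add_of_periodic periodic, ← add_assoc, Nat.div_add_mod,
    count_add_one_add_borrowB hn, pow_succ]
  simpa using count_mul_add_of_periodic periodic b 0

theorem borrowB_add_one_add_one (hb : 1 < b) (hn : n < b ^ (L + 1)) (β : ℕ) :
    borrowB b (L + 1) n (β + 1) =
      (b - n / b ^ L - 1) * borrowA b (n % b ^ L) β +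
        (b - n / b ^ L) * borrowB b L (n % b ^ L) β := by
  have lead_lt : n / b ^ L < b := Nat.div_lt_of_lt_mul (by rwa [← pow_succ])
  obtain ⟨e, he⟩ := Nat.exists_eq_add_of_lt lead_lt
  rw [show b - n / b ^ L - 1 = e by omega, show b - n / b ^ L = e + 1 by omega]
  have total := add_borrowB_add_one_eq_mul hb hn β
  have mul_split := congrArg
    (· * (borrowA b (n % b ^ L) β + borrowB b L (n % b ^ L) β)) he
  linarith

end Borrows

theorem stmt6_general (b : ℕ) (hb : 2 ≤ b) (n l : ℕ) (hn : n < b ^ (l + 1)) :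
    borrowB b (l + 1) n 0 = 0 ∧
    ∀ β : ℕ, 1 ≤ β →
      borrowB b (l + 1) n β =
        (b - n / b ^ l - 1) * borrowA b (n % b ^ l) (β - 1) +
          (b - n / b ^ l) * borrowB b l (n % b ^ l) (β - 1) := by
  refine ⟨borrowB_add_one_zero b l n, fun β hβ => ?_⟩
  obtain ⟨γ, rfl⟩ := Nat.exists_eq_add_of_le' hβ
  exact borrowB_add_one_add_one hb hn γ

/-- For `b ≥ 2` and `n ≥ 1` with base-`b` digits `n_l ⋯ n_0` (leading digit `n_l = n / b^l`,
`n' = n mod b^l`): `B_n(0) = 0`, and for every `β ≥ 1`,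
`B_n(β) = (b − n_l − 1) · A_{n'}(β−1) + (b − n_l) · B_{n'}(β−1)`,
where `B_n` is taken with respect to the `l+1` digit positions of `n` and `B_{n'}` with
respect to the `l` digit positions of `n'`. -/
theorem stmt6 (b : ℕ) (hb : 2 ≤ b) (n l : ℕ) (hn : 1 ≤ n)
    (hl : (Nat.digits b n).length = l + 1) :
    borrowB b (l + 1) n 0 = 0 ∧
    ∀ β : ℕ, 1 ≤ β →
      borrowB b (l + 1) n β =
        (b - n / b ^ l - 1) * borrowA b (n % b ^ l) (β - 1) +
          (b - n / b ^ l) * borrowB b l (n % b ^ l) (β - 1) :=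
  stmt6_general b hb n l ((Nat.digits_length_le_iff hb n).1 hl.le)
end

section
/- Let b ≥ 2 and let n ≥ 1 have standard base-b digits n_l n_{l−1} ⋯ n_0, and let 0 ≤ β ≤ l. Writing n^{(k)} = n mod b^{l+1−k} (the number whose digits are the last l+1−k digits of n), one has the identity in the rational numbers: A_n(β)/A_n(0) − A_{n^{(l−β+1)}}(β)/A_{n^{(l−β+1)}}(0) = Σ_{j=0}^{l−β} Σ_{i=1}^{β} c(n_{l−j} n_{l−j−1} ⋯ n_{l−j−i}) · A_{n^{(j+i+1)}}(β−i)/A_{n^{(j+i+1)}}(0). -/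
/-!
Let `A_L(β)` and `B_L(β)` count the `m < b ^ L` with `β` borrows in the lowest `L` positions and
`m ≤ n % b ^ L`, respectively `m > n % b ^ L`. Writing `m < b ^ (L + 1)` as `m' + b ^ L * e`, the
top digit `e` creates a new borrow exactly when `m > n % b ^ (L + 1)`, so with `d` the digit of `n`
at position `L`,

* `A_{L+1}(β) = (d + 1) A_L(β) + d B_L(β)`,
* `B_{L+1}(β + 1) = (b - d - 1) A_L(β) + (b - d) B_L(β)`.

Since `B_L(0) = 0`, dividing by `A_{L+1}(0) = (d + 1) A_L(0)` turns these into recurrences for the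
ratios `A_L(β) / A_L(0)` and `B_L(β) / A_L(0)` whose coefficients are the factors of `c`. Unrolling
the second one down to `β = 0` and substituting into the first gives the inner sum of the theorem;
telescoping the first one over `L` gives the outer sum.
-/

open Finset

section CountingOnProducts

lemma sum_range_mul_eq_sum_sum {M : Type*} [AddCommMonoid M] (N k : ℕ) (f : ℕ → M) :
    ∑ m ∈ range (N * k), f m = ∑ m ∈ range N, ∑ e ∈ range k, f (m + N * e) := by
  rw [sum_comm]
  induction k with
  | zero => simp
  | succ k ih =>
    rw [Nat.mul_succ, sum_range_add, ih, sum_range_succ]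
    simp only [add_comm (N * k)]

lemma card_filter_range_mul (N k : ℕ) (p : ℕ → Prop) [DecidablePred p] :
    #{m ∈ range (N * k) | p m} = ∑ m ∈ range N, #{e ∈ range k | p (m + N * e)} := by
  simp only [card_filter, sum_range_mul_eq_sum_sum]

lemma card_filter_range_lt {k t : ℕ} (ht : t ≤ k) : #{e ∈ range k | e < t} = t := by
  have : {e ∈ range k | e < t} = range t := by grind
  rw [this, card_range]

lemma card_filter_range_not_lt {k t : ℕ} (ht : t ≤ k) : #{e ∈ range k | ¬ e < t} = k - t := by
  have := card_filter_add_card_filter_not (s := range k) (· < t)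
  rw [card_filter_range_lt ht, card_range] at this
  omega

lemma add_mul_le_add_mul_iff {N m r : ℕ} (hm : m < N) (hr : r < N) (e d : ℕ) :
    m + N * e ≤ r + N * d ↔ e < if m ≤ r then d + 1 else d := by
  rcases lt_trichotomy e d with hlt | rfl | hgt
  · have : N * (e + 1) ≤ N * d := Nat.mul_le_mul_left N hlt
    grind
  · grind
  · have : N * (d + 1) ≤ N * e := Nat.mul_le_mul_left N hgt
    grind

lemma add_pow_mul_lt_pow_succ {b L m e : ℕ} (hm : m < b ^ L) (he : e < b) :
    m + b ^ L * e < b ^ (L + 1) :=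
  calc m + b ^ L * e < b ^ L * (e + 1) := by rw [mul_add_one]; omega
    _ ≤ b ^ (L + 1) := by rw [pow_succ]; exact Nat.mul_le_mul_left _ he

end CountingOnProducts

section LowBorrowCount

/-- The number of borrows among the lowest `L` positions when subtracting `m` from `n` in base `b`.
Unlike `borrowCount`, it fixes the number of positions independently of `n`, which makes it
additive when a digit is prepended. -/
def lowBorrowCount (b L n m : ℕ) : ℕ :=
  #{i ∈ range L | n % b ^ (i + 1) < m % b ^ (i + 1)}

variable {b L n m r d e : ℕ}

lemma lowBorrowCount_add_pow_mul (b L r m d e : ℕ) :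
    lowBorrowCount b L (r + b ^ L * d) (m + b ^ L * e) = lowBorrowCount b L r m := by
  have mod_add : ∀ i < L, ∀ x y, (x + b ^ L * y) % b ^ (i + 1) = x % b ^ (i + 1) := by
    intro i hi x y
    obtain ⟨c, hc⟩ := pow_dvd_pow b (Nat.succ_le_of_lt hi)
    rw [hc, mul_assoc, Nat.add_mul_mod_self_left]
  refine congrArg card (filter_congr fun i hi => ?_)
  rw [mod_add i (mem_range.mp hi), mod_add i (mem_range.mp hi)]

lemma lowBorrowCount_succ (b L n m : ℕ) :
    lowBorrowCount b (L + 1) n m =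
      lowBorrowCount b L n m + if n % b ^ (L + 1) < m % b ^ (L + 1) then 1 else 0 := by
  simp only [lowBorrowCount, card_filter, sum_range_succ]

lemma lowBorrowCount_succ_add_pow_mul (hr : r < b ^ L) (hd : d < b) (hm : m < b ^ L) (he : e < b) :
    lowBorrowCount b (L + 1) (r + b ^ L * d) (m + b ^ L * e) =
      lowBorrowCount b L r m + if m + b ^ L * e ≤ r + b ^ L * d then 0 else 1 := by
  rw [lowBorrowCount_succ, lowBorrowCount_add_pow_mul,
    Nat.mod_eq_of_lt (add_pow_mul_lt_pow_succ hr hd),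
    Nat.mod_eq_of_lt (add_pow_mul_lt_pow_succ hm he)]
  simp only [← not_le, ite_not]

lemma lowBorrowCount_pos (hm : m < b ^ L) (hnm : n < m) : 0 < lowBorrowCount b L n m := by
  cases L with
  | zero => simp at hm; omega
  | succ L =>
    refine card_pos.mpr ⟨L, mem_filter.mpr ⟨self_mem_range_succ L, ?_⟩⟩
    rwa [Nat.mod_eq_of_lt hm, Nat.mod_eq_of_lt (hnm.trans hm)]

lemma borrowCount_eq_lowBorrowCount (hb : 1 < b) (hn : n < b ^ L) (hmn : m ≤ n) :
    borrowCount b n m = lowBorrowCount b L n m := by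
  have hlen : (Nat.digits b n).length ≤ L := (Nat.digits_length_le_iff hb n).mpr hn
  refine congrArg card ((filter_subset_filter _ (range_subset_range.mpr hlen)).antisymm ?_)
  intro i hi
  obtain ⟨-, hborrow⟩ := mem_filter.mp hi
  refine mem_filter.mpr ⟨mem_range.mpr ?_, hborrow⟩
  by_contra! hlong
  have hni : n < b ^ (i + 1) := (Nat.digits_length_le_iff hb n).mp (by omega)
  rw [Nat.mod_eq_of_lt hni, Nat.mod_eq_of_lt (hmn.trans_lt hni)] at hborrow
  omega

end LowBorrowCount

section Recurrences

variable {b L n r d : ℕ}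

lemma borrowA_eq_card_lowBorrowCount (hb : 1 < b) (hn : n < b ^ L) (β : ℕ) :
    borrowA b n β = #{m ∈ range (b ^ L) | lowBorrowCount b L n m = β ∧ m ≤ n} := by
  refine congrArg card (Finset.ext fun m => ?_)
  have := borrowCount_eq_lowBorrowCount (m := m) hb hn
  grind

lemma borrowB_eq_card_lowBorrowCount (hb : 0 < b) (L n β : ℕ) :
    borrowB b L n β = #{m ∈ range (b ^ L) | lowBorrowCount b L n m = β ∧ ¬ m ≤ n} := by
  have hpos : 0 < b ^ L := Nat.pow_pos hb
  refine congrArg card (Finset.ext fun m => ?_)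
  simp only [mem_filter, mem_Ioc, mem_range]
  rw [lowBorrowCount]
  omega

lemma borrowA_zero_pos (b n : ℕ) : 0 < borrowA b n 0 :=
  card_pos.mpr ⟨0, by simp [borrowCount]⟩

lemma borrowB_zero (hb : 0 < b) (L n : ℕ) : borrowB b L n 0 = 0 := by
  rw [borrowB_eq_card_lowBorrowCount hb, card_eq_zero, filter_eq_empty_iff]
  rintro m hm ⟨hzero, hnm⟩
  exact (lowBorrowCount_pos (mem_range.mp hm) (not_le.mp hnm)).ne' hzero

lemma sum_ite_le_lowBorrowCount (hb : 1 < b) (hr : r < b ^ L) (β x y : ℕ) :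
    ∑ m ∈ range (b ^ L) with lowBorrowCount b L r m = β, (if m ≤ r then x else y) =
      x * borrowA b r β + y * borrowB b L r β := by
  rw [sum_ite, sum_const, sum_const, filter_filter, filter_filter,
    ← borrowA_eq_card_lowBorrowCount hb hr, ← borrowB_eq_card_lowBorrowCount (by omega),
    smul_eq_mul, smul_eq_mul, mul_comm x, mul_comm y]

theorem borrowA_add_pow_mul (hb : 1 < b) (hr : r < b ^ L) (hd : d < b) (β : ℕ) :
    borrowA b (r + b ^ L * d) β = (d + 1) * borrowA b r β + d * borrowB b L r β := by
  have count_top_digit : ∀ m ∈ range (b ^ L),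
      #{e ∈ range b | lowBorrowCount b (L + 1) (r + b ^ L * d) (m + b ^ L * e) = β ∧
          m + b ^ L * e ≤ r + b ^ L * d} =
        if lowBorrowCount b L r m = β then (if m ≤ r then d + 1 else d) else 0 := by
    intro m hm
    have hm := mem_range.mp hm
    rw [← card_filter_range_lt (k := b) (t := if m ≤ r then d + 1 else d) (by grind),
      ← card_empty, ← apply_ite card]
    refine congrArg card (Finset.ext fun e => ?_)
    have hle := add_mul_le_add_mul_iff hm hr e d
    have hcount := lowBorrowCount_succ_add_pow_mul (e := e) hr hd hm
    grind
  rw [borrowA_eq_card_lowBorrowCount hb (add_pow_mul_lt_pow_succ hr hd), pow_succ,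
    card_filter_range_mul, sum_congr rfl count_top_digit, ← sum_filter,
    sum_ite_le_lowBorrowCount hb hr]

theorem borrowB_add_pow_mul (hb : 1 < b) (hr : r < b ^ L) (hd : d < b) (β : ℕ) :
    borrowB b (L + 1) (r + b ^ L * d) (β + 1) =
      (b - (d + 1)) * borrowA b r β + (b - d) * borrowB b L r β := by
  have count_top_digit : ∀ m ∈ range (b ^ L),
      #{e ∈ range b | lowBorrowCount b (L + 1) (r + b ^ L * d) (m + b ^ L * e) = β + 1 ∧
          ¬ m + b ^ L * e ≤ r + b ^ L * d} =
        if lowBorrowCount b L r m = β then (if m ≤ r then b - (d + 1) else b - d) else 0 := by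
    intro m hm
    have hm := mem_range.mp hm
    rw [← apply_ite (b - ·),
      ← card_filter_range_not_lt (k := b) (t := if m ≤ r then d + 1 else d) (by grind),
      ← card_empty, ← apply_ite card]
    refine congrArg card (Finset.ext fun e => ?_)
    have hle := add_mul_le_add_mul_iff hm hr e d
    have hcount := lowBorrowCount_succ_add_pow_mul (e := e) hr hd hm
    grind
  rw [borrowB_eq_card_lowBorrowCount (by omega), pow_succ,
    card_filter_range_mul, sum_congr rfl count_top_digit, ← sum_filter,
    sum_ite_le_lowBorrowCount hb hr]

end Recurrences

section Ratios

/-- The digit of `n` at position `i` in base `b`, equal to `0` beyond the leading digit. -/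
def digitAt (b n i : ℕ) : ℕ := n / b ^ i % b

/-- The normalized count `A_{n mod b^L}(β) / A_{n mod b^L}(0)`, which telescopes over `L`. -/
def ratioA (b n L β : ℕ) : ℚ := borrowA b (n % b ^ L) β / borrowA b (n % b ^ L) 0

/-- The normalized count `B_{n mod b^L}(β) / A_{n mod b^L}(0)`, with `B` taken with respect to `L`
digit positions. It carries the borrow out of position `L - 1` in the recurrence for `ratioA`. -/
def ratioB (b n L β : ℕ) : ℚ := borrowB b L (n % b ^ L) β / borrowA b (n % b ^ L) 0

/-- The weight `c(n_L ⋯ n_{L-i-1})` without its first factor `n_L / (n_L + 1)`: the contribution of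
the `i + 1` digits below position `L`. It has this meaning only for `i < L`, because the positions
are truncated differences. -/
def tailWeight (b n L i : ℕ) : ℚ :=
  (∏ h ∈ range i, ((b : ℚ) - digitAt b n (L - (h + 1))) / (digitAt b n (L - (h + 1)) + 1)) *
    (((b : ℚ) - digitAt b n (L - (i + 1)) - 1) / (digitAt b n (L - (i + 1)) + 1))

variable {b : ℕ}

lemma tailWeight_succ_zero (b n L : ℕ) :
    tailWeight b n (L + 1) 0 = ((b : ℚ) - digitAt b n L - 1) / (digitAt b n L + 1) := by
  simp [tailWeight]

lemma tailWeight_succ_succ (b n L i : ℕ) :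
    tailWeight b n (L + 1) (i + 1) =
      ((b : ℚ) - digitAt b n L) / (digitAt b n L + 1) * tailWeight b n L i := by
  simp only [tailWeight, prod_range_succ', Nat.add_sub_add_right, Nat.sub_zero]
  ring

lemma cword_digits_eq_mul_tailWeight (b n L i : ℕ) :
    cword b ((List.range (i + 1 + 1)).map fun t => n / b ^ (L - t) % b) =
      (digitAt b n L : ℚ) / (digitAt b n L + 1) * tailWeight b n L i := by
  have letter : ∀ h < i + 1 + 1,
      ((List.range (i + 1 + 1)).map fun t => n / b ^ (L - t) % b).getD h 0 =
        digitAt b n (L - h) := by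
    intro h hh
    simp [List.getD, hh, digitAt]
  simp only [cword, tailWeight, List.length_map, List.length_range, Nat.add_sub_cancel, ← mul_assoc]
  rw [letter 0 (by omega), letter (i + 1) (by omega), prod_Ico_eq_prod_range, Nat.add_sub_cancel,
    Nat.sub_zero]
  congr 2
  refine prod_congr rfl fun h hh => ?_
  have := mem_range.mp hh
  rw [letter (1 + h) (by omega), add_comm 1 h]

lemma borrowA_mod_pow_succ (hb : 1 < b) (n L β : ℕ) :
    (borrowA b (n % b ^ (L + 1)) β : ℚ) =
      (digitAt b n L + 1) * borrowA b (n % b ^ L) β +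
        digitAt b n L * borrowB b L (n % b ^ L) β := by
  have hmod : n % b ^ L < b ^ L := Nat.mod_lt n (by positivity)
  have hdigit : digitAt b n L < b := Nat.mod_lt _ (by omega)
  rw [Nat.mod_pow_succ]
  exact_mod_cast borrowA_add_pow_mul hb hmod hdigit β

lemma borrowB_mod_pow_succ (hb : 1 < b) (n L β : ℕ) :
    (borrowB b (L + 1) (n % b ^ (L + 1)) (β + 1) : ℚ) =
      (b - digitAt b n L - 1) * borrowA b (n % b ^ L) β +
        (b - digitAt b n L) * borrowB b L (n % b ^ L) β := by
  have hmod : n % b ^ L < b ^ L := Nat.mod_lt n (by positivity)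
  have hdigit : digitAt b n L < b := Nat.mod_lt _ (by omega)
  have h := congrArg (Nat.cast (R := ℚ)) (borrowB_add_pow_mul hb hmod hdigit β)
  push_cast [Nat.cast_sub hdigit.le, Nat.cast_sub (Nat.succ_le_of_lt hdigit)] at h
  rw [Nat.mod_pow_succ, sub_sub]
  exact h

lemma borrowA_mod_pow_succ_zero (hb : 1 < b) (n L : ℕ) :
    (borrowA b (n % b ^ (L + 1)) 0 : ℚ) = (digitAt b n L + 1) * borrowA b (n % b ^ L) 0 := by
  rw [borrowA_mod_pow_succ hb, borrowB_zero (by omega), Nat.cast_zero, mul_zero, add_zero]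

lemma ratioA_succ (hb : 1 < b) (n L β : ℕ) :
    ratioA b n (L + 1) β =
      ratioA b n L β + (digitAt b n L : ℚ) / (digitAt b n L + 1) * ratioB b n L β := by
  have hA : (borrowA b (n % b ^ L) 0 : ℚ) ≠ 0 := by exact_mod_cast (borrowA_zero_pos _ _).ne'
  rw [ratioA, ratioA, ratioB, borrowA_mod_pow_succ_zero hb, borrowA_mod_pow_succ hb]
  field_simp

lemma ratioB_succ_succ (hb : 1 < b) (n L β : ℕ) :
    ratioB b n (L + 1) (β + 1) =
      ((b : ℚ) - digitAt b n L - 1) / (digitAt b n L + 1) * ratioA b n L β +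
        ((b : ℚ) - digitAt b n L) / (digitAt b n L + 1) * ratioB b n L β := by
  have hA : (borrowA b (n % b ^ L) 0 : ℚ) ≠ 0 := by exact_mod_cast (borrowA_zero_pos _ _).ne'
  rw [ratioA, ratioB, ratioB, borrowA_mod_pow_succ_zero hb, borrowB_mod_pow_succ hb]
  field_simp

theorem ratioB_eq_sum_tailWeight_mul_ratioA (hb : 1 < b) (n : ℕ) {L β : ℕ} (hβ : β ≤ L) :
    ratioB b n L β =
      ∑ i ∈ range β, tailWeight b n L i * ratioA b n (L - (i + 1)) (β - (i + 1)) := by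
  induction β generalizing L with
  | zero => simp [ratioB, borrowB_zero (show 0 < b by omega)]
  | succ β ih =>
    obtain ⟨L, rfl⟩ : ∃ K, L = K + 1 := ⟨L - 1, by omega⟩
    simp only [ratioB_succ_succ hb, ih (Nat.le_of_succ_le_succ hβ), sum_range_succ',
      tailWeight_succ_succ, tailWeight_succ_zero, Nat.add_sub_add_right, Nat.sub_zero, mul_sum,
      mul_assoc, add_comm]

theorem ratioA_succ_sub_ratioA (hb : 1 < b) (n : ℕ) {L β : ℕ} (hβ : β ≤ L) :
    ratioA b n (L + 1) β - ratioA b n L β =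
      ∑ i ∈ Icc 1 β, cword b ((List.range (i + 1)).map fun t => n / b ^ (L - t) % b) *
        ratioA b n (L - i) (β - i) := by
  rw [ratioA_succ hb, add_sub_cancel_left, ratioB_eq_sum_tailWeight_mul_ratioA hb n hβ, mul_sum,
    ← Ico_add_one_right_eq_Icc, sum_Ico_eq_sum_range, Nat.add_sub_cancel]
  refine sum_congr rfl fun i _ => ?_
  rw [add_comm 1 i, cword_digits_eq_mul_tailWeight, mul_assoc]

end Ratios

/-- For `b ≥ 2`, `n ≥ 1` with base-`b` digits `n_l ⋯ n_0`, and `0 ≤ β ≤ l`, writing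
`n^{(k)} = n mod b^{l+1−k}`, one has, in the rational numbers:
`A_n(β)/A_n(0) − A_{n^{(l−β+1)}}(β)/A_{n^{(l−β+1)}}(0)
 = Σ_{j=0}^{l−β} Σ_{i=1}^{β} c(n_{l−j} ⋯ n_{l−j−i}) · A_{n^{(j+i+1)}}(β−i)/A_{n^{(j+i+1)}}(0)`.
(Note `n^{(l−β+1)} = n mod b^β` and `n^{(j+i+1)} = n mod b^{l−j−i}`.) -/
theorem stmt9 (b : ℕ) (hb : 2 ≤ b) (n l β : ℕ) (hn : 1 ≤ n)
    (hl : (Nat.digits b n).length = l + 1) (hβ : β ≤ l) :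
    (borrowA b n β : ℚ) / (borrowA b n 0 : ℚ) -
        (borrowA b (n % b ^ β) β : ℚ) / (borrowA b (n % b ^ β) 0 : ℚ) =
      ∑ j ∈ Finset.range (l - β + 1), ∑ i ∈ Finset.Icc 1 β,
        cword b ((List.range (i + 1)).map fun t => n / b ^ (l - j - t) % b) *
          ((borrowA b (n % b ^ (l - j - i)) (β - i) : ℚ) /
            (borrowA b (n % b ^ (l - j - i)) 0 : ℚ)) := by
  have hn_mod : n % b ^ (l + 1) = n :=
    Nat.mod_eq_of_lt ((Nat.digits_length_le_iff hb n).mp hl.le)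
  calc (borrowA b n β : ℚ) / borrowA b n 0 -
        (borrowA b (n % b ^ β) β : ℚ) / borrowA b (n % b ^ β) 0
      = ratioA b n (l + 1 - 0) β - ratioA b n (l + 1 - (l - β + 1)) β := by
        rw [show l + 1 - (l - β + 1) = β by omega, Nat.sub_zero, ratioA, ratioA, hn_mod]
    _ = ∑ j ∈ range (l - β + 1),
          (ratioA b n (l + 1 - j) β - ratioA b n (l + 1 - (j + 1)) β) :=
        (sum_range_sub' (fun j => ratioA b n (l + 1 - j) β) _).symm
    _ = _ := sum_congr rfl fun j hj => by
        have hj := mem_range.mp hj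
        rw [show l + 1 - j = l - j + 1 by omega, Nat.add_sub_add_right]
        exact ratioA_succ_sub_ratioA hb n (by omega)
end
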